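/- Let A be an Artin group with Artin generating set S, let a, b ∈ S be two generators not connected by an edge in the defining graph (i.e., no relation between a and b). Then the subgroup of A generated by a and b is a free group of rank 2. -/

import Mathlib

/-- `altWord a b n` is the prefix of length `n` of the alternating word `abab…`
in the free group. -/
def altWord {α : Type*} (a b : α) : ℕ → FreeGroup α
  | 0 => 1
  | n + 1 => FreeGroup.of a * altWord b a n

/-- The Artin relations associated to a labelled graph. -/
def artinRels {α : Type*} (E : α → α → Prop) (m : α → α → ℕ) : Set (FreeGroup α) :=
  { r | ∃ a b : α, E a b ∧ r = altWord a b (m a b) * (altWord b a (m a b))⁻¹ }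

/-!
The Artin group acts linearly on the functions `α → ℂ`, the generator `s` acting as the transvection
`g ↦ g + g s • c s` for a symmetric weight `c` that vanishes on the diagonal. Two transvections with
weight `c s t` satisfy the braid relation of length `n` as soon as `c s t` is a root of the `n`-th
Fibonacci polynomial, and `ℂ` contains such a root for every `n ≥ 2`. Non-adjacent generators may be
given the weight `2`; then the norms of the two coordinates play ping-pong, as in Sanov's theorem.
-/

open Module Polynomial
open scoped Function Pointwise

/-- The Fibonacci polynomials `0, 1, X, X ^ 2 + 1, …`, indexed so that the value of the `n`-th one
at `1` is the `n`-th Fibonacci number. Their roots are the weights for which two transvections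
satisfy a braid relation. -/
noncomputable def fibPolynomial (R : Type*) [Semiring R] : ℕ → R[X]
  | 0 => 0
  | 1 => 1
  | n + 2 => X * fibPolynomial R (n + 1) + fibPolynomial R n

theorem fibPolynomial_add_two (R : Type*) [Semiring R] (n : ℕ) :
    fibPolynomial R (n + 2) = X * fibPolynomial R (n + 1) + fibPolynomial R n :=
  rfl

theorem eval_fibPolynomial_add_two {R : Type*} [CommSemiring R] (c : R) (n : ℕ) :
    (fibPolynomial R (n + 2)).eval c =
      c * (fibPolynomial R (n + 1)).eval c + (fibPolynomial R n).eval c := by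
  simp [fibPolynomial_add_two]

theorem degree_fibPolynomial_succ (R : Type*) [Semiring R] [Nontrivial R] (n : ℕ) :
    (fibPolynomial R (n + 1)).degree = n := by
  induction n using Nat.twoStepInduction with
  | zero => simp [fibPolynomial]
  | one => simp [fibPolynomial]
  | more n ih ih' =>
    have hX : (X * fibPolynomial R (n + 2)).degree = ((n + 2 : ℕ) : WithBot ℕ) := by
      rw [X_mul, degree_mul_X, ih', ← Nat.cast_add_one]
    have hlt : (fibPolynomial R (n + 1)).degree < (X * fibPolynomial R (n + 2)).degree := by
      rw [ih, hX]
      exact_mod_cast Nat.lt_add_of_pos_right two_pos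
    rw [fibPolynomial_add_two, degree_add_eq_left_of_degree_lt hlt, hX]

theorem exists_isRoot_fibPolynomial (K : Type*) [Field K] [IsAlgClosed K] {n : ℕ} (hn : n ≠ 1) :
    ∃ c, (fibPolynomial K n).IsRoot c := by
  cases n with
  | zero => exact ⟨0, by simp [fibPolynomial]⟩
  | succ n =>
    refine IsAlgClosed.exists_root _ ?_
    rw [degree_fibPolynomial_succ]
    exact_mod_cast fun h : n = 0 => hn (by rw [h])

section Transvection

variable {R V : Type*} [CommRing R] [AddCommGroup V] [Module R V]

theorem transvection_zpow_apply {f : Dual R V} {v : V} (h : f v = 0) (n : ℤ) (x : V) :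
    (LinearEquiv.transvection h ^ n) x = x + n • f x • v := by
  induction n generalizing x with
  | zero => simp
  | succ n ih =>
    rw [zpow_add_one, LinearEquiv.mul_apply, ih]
    simp only [LinearEquiv.transvection.apply, map_add, map_smul, h]
    module
  | pred n ih =>
    rw [zpow_sub_one, LinearEquiv.mul_apply, ih, LinearEquiv.transvection.inv_eq h (by simp [h])]
    simp only [LinearEquiv.transvection.apply, map_add, map_smul, map_neg, h]
    module

variable {α : Type*} {f : α → Dual R V} {v : α → V}

/-- The linear action of the free group in which the generator `s` acts as the transvection
`x ↦ x + f s x • v s`. -/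
abbrev transvectionHom (h : ∀ s, f s (v s) = 0) : FreeGroup α →* V ≃ₗ[R] V :=
  FreeGroup.lift fun s => LinearEquiv.transvection (h s)

theorem transvectionHom_altWord_succ_apply (h : ∀ s, f s (v s) = 0) (s t : α) (n : ℕ) (x : V) :
    transvectionHom h (altWord s t (n + 1)) x =
      transvectionHom h (altWord t s n) x + f s (transvectionHom h (altWord t s n) x) • v s := by
  simp [altWord, LinearMap.transvection.apply]

-- `p` and `q` are `f a x` and `f b x`, swapped at each step: the first letter to act on `x` is the
-- last one of the word, and it alternates with `n`.
theorem exists_transvectionHom_altWord_sub (h : ∀ s, f s (v s) = 0) {a b : α} {c : R}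
    (hab : f a (v b) = c) (hba : f b (v a) = c) (x : V) (n : ℕ) :
    ∃ p q : R,
      f a (transvectionHom h (altWord b a n) x) =
        (fibPolynomial R (n + 1)).eval c * p + (fibPolynomial R n).eval c * q ∧
      f b (transvectionHom h (altWord a b n) x) =
        (fibPolynomial R (n + 1)).eval c * q + (fibPolynomial R n).eval c * p ∧
      transvectionHom h (altWord a b n) x - transvectionHom h (altWord b a n) x =
        (fibPolynomial R n).eval c • (q • v a - p • v b) := by
  induction n with
  | zero => exact ⟨f a x, f b x, by simp [fibPolynomial, altWord]⟩
  | succ n ih =>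
    obtain ⟨p, q, ha, hb, hsub⟩ := ih
    have ha' : f a (transvectionHom h (altWord a b n) x) =
        (fibPolynomial R (n + 1)).eval c * p + (fibPolynomial R n).eval c * (q - c * p) := by
      rw [eq_add_of_sub_eq hsub]
      simp only [map_add, map_sub, map_smul, smul_eq_mul, h, hab, ha]
      ring
    have hb' : f b (transvectionHom h (altWord b a n) x) =
        (fibPolynomial R (n + 1)).eval c * q + (fibPolynomial R n).eval c * (p - c * q) := by
      rw [← sub_sub_cancel (transvectionHom h (altWord a b n) x)
        (transvectionHom h (altWord b a n) x), hsub]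
      simp only [map_sub, map_smul, smul_eq_mul, h, hba, hb]
      ring
    simp only [transvectionHom_altWord_succ_apply, map_add, map_smul, smul_eq_mul, ha, ha', hb, hb',
      hab, hba, eval_fibPolynomial_add_two]
    refine ⟨q, p, by ring, by ring, ?_⟩
    rw [eq_add_of_sub_eq hsub]
    module

theorem transvectionHom_altWord_comm (h : ∀ s, f s (v s) = 0) {a b : α} {n : ℕ}
    (hab : f a (v b) = f b (v a)) (hroot : (fibPolynomial R n).IsRoot (f a (v b))) :
    transvectionHom h (altWord a b n) = transvectionHom h (altWord b a n) := by
  ext x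
  obtain ⟨p, q, -, -, hsub⟩ := exists_transvectionHom_altWord_sub h rfl hab.symm x n
  rwa [hroot.eq_zero, zero_smul, sub_eq_zero] at hsub

theorem transvectionHom_eq_one_of_mem_artinRels (h : ∀ s, f s (v s) = 0) {E : α → α → Prop}
    {m : α → α → ℕ} (hsymm : ∀ s t, E s t → f s (v t) = f t (v s))
    (hroot : ∀ s t, E s t → (fibPolynomial R (m s t)).IsRoot (f s (v t))) :
    ∀ r ∈ artinRels E m, transvectionHom h r = 1 := by
  rintro _ ⟨s, t, hst, rfl⟩
  rw [map_mul, map_inv, mul_inv_eq_one]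
  exact transvectionHom_altWord_comm h (hsymm s t hst) (hroot s t hst)

end Transvection

theorem exists_artin_weight (K : Type*) [Field K] [IsAlgClosed K] {α : Type*}
    {E : α → α → Prop} {m : α → α → ℕ} (hsymm : ∀ s t, E s t → E t s) (hirr : ∀ s, ¬ E s s)
    (hm : ∀ s t, E s t → m s t ≠ 1) (hmsymm : ∀ s t, m s t = m t s) (d : K) :
    ∃ c : α → α → K, (∀ s, c s s = 0) ∧ (∀ s t, c s t = c t s) ∧
      (∀ s t, E s t → (fibPolynomial K (m s t)).IsRoot (c s t)) ∧
      ∀ s t, s ≠ t → ¬ E s t → c s t = d := by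
  classical
  have hroot (n : ℕ) : ∃ z : K, n ≠ 1 → (fibPolynomial K n).IsRoot z := by
    by_cases hn : n = 1
    · exact ⟨0, fun hn' => absurd hn hn'⟩
    · exact (exists_isRoot_fibPolynomial K hn).imp fun _ hz _ => hz
  choose root hroot using hroot
  have hEcomm (s t : α) : E s t ↔ E t s := ⟨hsymm s t, hsymm t s⟩
  refine ⟨fun s t => if s = t then 0 else if E s t then root (m s t) else d, fun s => if_pos rfl,
    fun s t => ?_, fun s t hst => ?_, fun s t hne hst => ?_⟩
  · simp only [eq_comm (a := s), hEcomm s t, hmsymm s t]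
  · have hne : s ≠ t := fun h => hirr t (h ▸ hst)
    simpa only [if_neg hne, if_pos hst] using hroot _ (hm s t hst)
  · simp only [if_neg hne, if_neg hst]

section PingPong

theorem injective_lift_of_zpow_ping_pong {ι G β : Type*} [Nontrivial ι] [Group G] [MulAction G β]
    (a : ι → G) (X : ι → Set β) (hXnonempty : ∀ i, (X i).Nonempty)
    (hXdisj : Pairwise (Disjoint on X))
    (hpp : Pairwise fun i j => ∀ n : ℤ, n ≠ 0 → a i ^ n • X j ⊆ X i) :
    Function.Injective (FreeGroup.lift a) := by
  have hfactor : FreeGroup.lift a =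
      (Monoid.CoprodI.lift fun i => FreeGroup.lift fun _ : Unit => a i).comp
        (freeGroupEquivCoprodI (ι := ι)).toMonoidHom := by
    ext i
    simp
  have hcard : 3 ≤ Cardinal.mk (FreeGroup Unit) := by
    rw [FreeGroup.freeGroupUnitEquivInt.cardinal_eq, Cardinal.mk_denumerable]
    exact Cardinal.natCast_le_aleph0
  rw [hfactor, MonoidHom.coe_comp]
  refine Function.Injective.comp ?_ freeGroupEquivCoprodI.injective
  refine Monoid.CoprodI.lift_injective_of_ping_pong _ (.inr ⟨Classical.arbitrary ι, hcard⟩) X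
    hXnonempty hXdisj fun i j hij g hg => ?_
  obtain ⟨n, rfl⟩ : ∃ n : ℤ, FreeGroup.of () ^ n = g :=
    FreeGroup.freeGroupUnitEquivInt.symm.surjective g
  rw [map_zpow, FreeGroup.lift_apply_of]
  exact hpp hij n fun hn => hg (by rw [hn, zpow_zero])

variable {K V : Type*} [NormedField K] [NormSMulClass ℤ K]

theorem norm_lt_norm_add_zsmul_mul {x y d : K} (hd : 2 ≤ ‖d‖) (hyx : ‖y‖ < ‖x‖) {n : ℤ}
    (hn : n ≠ 0) : ‖x‖ < ‖y + n • (x * d)‖ := by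
  have hn' : 1 ≤ ‖n‖ := by
    rw [Int.norm_eq_abs]
    exact_mod_cast Int.one_le_abs hn
  have hlarge : 2 * ‖x‖ ≤ ‖n • (x * d)‖ := by
    calc 2 * ‖x‖ ≤ ‖x‖ * ‖d‖ := by rw [mul_comm]; gcongr
      _ ≤ ‖n‖ * (‖x‖ * ‖d‖) := le_mul_of_one_le_left (by positivity) hn'
      _ = ‖n • (x * d)‖ := by rw [norm_smul, norm_mul]
  have htri : ‖n • (x * d)‖ ≤ ‖y + n • (x * d)‖ + ‖y‖ := by
    simpa only [add_sub_cancel_left] using norm_sub_le (y + n • (x * d)) y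
  linarith

theorem injective_transvectionHom [AddCommGroup V] [Module K V] {f : Bool → Dual K V}
    {v : Bool → V} (h : ∀ i, f i (v i) = 0) (hlarge : ∀ i, 2 ≤ ‖f (!i) (v i)‖) :
    Function.Injective (transvectionHom h) := by
  refine injective_lift_of_zpow_ping_pong _ (fun i => {x | ‖f i x‖ < ‖f (!i) x‖})
    (fun i => ⟨v i, ?_⟩) (fun i j hij => ?_) fun i j hij n hn => ?_
  · rw [Set.mem_ofPred_eq, h, norm_zero]
    exact two_pos.trans_le (hlarge i)
  · obtain rfl : j = !i := Bool.eq_not.mpr hij.symm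
    rw [Function.onFun, Set.disjoint_left]
    intro x hx hx'
    rw [Set.mem_ofPred_eq, Bool.not_not] at hx'
    exact lt_asymm hx hx'
  · obtain rfl : j = !i := Bool.eq_not.mpr hij.symm
    rintro _ ⟨x, hx, rfl⟩
    rw [Set.mem_ofPred_eq, Bool.not_not] at hx
    simpa [transvection_zpow_apply, h] using norm_lt_norm_add_zsmul_mul (hlarge i) hx hn

end PingPong

/-- If two standard generators `a, b` of an Artin group are not connected by an edge, then
the subgroup they generate is free of rank 2: the natural map from the free group on two
letters sending the two generators to `a` and `b` is injective, with image `⟨a, b⟩`. -/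
theorem artin_nonadjacent_free {α : Type*} (E : α → α → Prop) (m : α → α → ℕ)
    (hsymm : Symmetric E) (hirr : ∀ a, ¬ E a a)
    (hm : ∀ a b, E a b → 2 ≤ m a b) (hmsymm : ∀ a b, m a b = m b a)
    (a b : α) (hab : a ≠ b) (hnoedge : ¬ E a b) :
    Function.Injective
      (FreeGroup.lift (fun c : Bool =>
        if c then (PresentedGroup.of a : PresentedGroup (artinRels E m))
        else PresentedGroup.of b)) ∧
    (FreeGroup.lift (fun c : Bool =>
        if c then (PresentedGroup.of a : PresentedGroup (artinRels E m))
        else PresentedGroup.of b)).range =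
      Subgroup.closure {PresentedGroup.of a, PresentedGroup.of b} := by
  constructor
  · obtain ⟨c, hdiag, hcsymm, hroot, htwo⟩ := exists_artin_weight (E := E) ℂ
      (fun _ _ h => hsymm h) hirr (fun s t hst => ne_of_gt (hm s t hst)) hmsymm 2
    have hrel := transvectionHom_eq_one_of_mem_artinRels (f := LinearMap.proj (R := ℂ)) (v := c)
      hdiag (fun s t _ => hcsymm t s) fun s t hst => (hcsymm t s).symm ▸ hroot s t hst
    have hinj := injective_transvectionHom (f := fun i => LinearMap.proj (if i then a else b))
      (v := fun i => c (if i then a else b)) (fun i => hdiag _) fun i => by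
        cases i <;> simp [hcsymm b a, htwo a b hab hnoedge]
    refine Function.Injective.of_comp (f := PresentedGroup.toGroup hrel) ?_
    rw [← MonoidHom.coe_comp]
    convert hinj using 2
    ext1 i
    cases i <;> simp
  · rw [FreeGroup.range_lift_eq_closure]
    congr 1
    ext x
    simp [or_comm]
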